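/- For all r̄ ∈ SO(3) with rows r̄_i = r̄ᵀ e_i and all γ̄ ∈ ℝ³ with |γ̄| < 1 there exist a constant w > 0 and a C^∞ isometric immersion u : [0,1] × [−w, w] → ℝ³ (i.e. ∂_i u · ∂_j u = δ_{ij} for i, j = 1,2) satisfying u(0,0) = 0, u(1,0) = γ̄, and, for i = 1,2: ∂_i u = e_i on {0} × (−w, w) and ∂_i u = r̄_i on {1} × (−w, w). -/

import Mathlib

open MeasureTheory Set Filter Matrix
open scoped RealInnerProductSpace Topology ENNReal NNReal

noncomputable section

/-- Euclidean 3-space. -/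
abbrev E3 : Type := EuclideanSpace ℝ (Fin 3)

/-- Cross product on `ℝ³`. -/
def cross3 (v w : E3) : E3 :=
  (WithLp.equiv 2 (Fin 3 → ℝ)).symm
    ![v 1 * w 2 - v 2 * w 1, v 2 * w 0 - v 0 * w 2, v 0 * w 1 - v 1 * w 0]

/-- The `i`-th row of a 3×3 matrix, as a vector in `ℝ³`; for `r ∈ SO(3)` this is `rᵀ eᵢ`. -/
def row3 (M : Matrix (Fin 3) (Fin 3) ℝ) (i : Fin 3) : E3 :=
  (WithLp.equiv 2 (Fin 3 → ℝ)).symm (M i)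

/-- The set of rotation matrices. -/
def SO3 : Set (Matrix (Fin 3) (Fin 3) ℝ) :=
  {M | M * Mᵀ = 1 ∧ M.det = 1}

/-- Lebesgue measure restricted to the unit interval `I = (0,1)`. -/
def muI : Measure ℝ := volume.restrict (Set.Ioo 0 1)

/-- `f` is absolutely continuous on `[a,b]` with (a.e.) derivative `f'` (fundamental theorem of
calculus form); this encodes `f ∈ W^{1,1}((a,b))` via its continuous representative. -/
def FTCOn (f f' : ℝ → E3) (a b : ℝ) : Prop :=
  IntervalIntegrable f' volume a b ∧
  ∀ t ∈ Set.Icc a b, f t = f a + ∫ s in a..t, f' s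

/-- `V` is the parallel transport of `v` along the spherical curve `β` (with derivative `β'`)
on `[a,b]`: the absolutely continuous solution of `V' = -(V·β')β`, `V a = v`, in integral form.
`V t` is the quantity denoted `Π_{β|_(a,t)} v`. -/
def IsParTrans (β β' : ℝ → E3) (a b : ℝ) (v : E3) (V : ℝ → E3) : Prop :=
  V a = v ∧
  IntervalIntegrable (fun s => ⟪V s, β' s⟫ • β s) volume a b ∧
  ∀ t ∈ Set.Icc a b, V t = v - ∫ s in a..t, ⟪V s, β' s⟫ • β s

/-- The action of a matrix on `E3`. -/
def acl (P : Matrix (Fin 3) (Fin 3) ℝ) : E3 →L[ℝ] E3 := toEuclideanCLM (𝕜 := ℝ) P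

lemma acl_apply (P : Matrix (Fin 3) (Fin 3) ℝ) (v : E3) (i : Fin 3) :
    acl P v i = P i 0 * v 0 + P i 1 * v 1 + P i 2 * v 2 := by
  simp [acl, ofLp_toEuclideanCLM, Matrix.mulVec, dotProduct, Fin.sum_univ_three]

lemma acl_mul (P Q : Matrix (Fin 3) (Fin 3) ℝ) (v : E3) : acl (P * Q) v = acl P (acl Q v) := by
  simp [acl]

lemma acl_one (v : E3) : acl 1 v = v := by
  simp [acl]

lemma inner3 (v w : E3) : ⟪v, w⟫ = v 0 * w 0 + v 1 * w 1 + v 2 * w 2 := by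
  simp [PiLp.inner_apply, Fin.sum_univ_three]
  ring

lemma acl_inner (P : Matrix (Fin 3) (Fin 3) ℝ) (hP : Pᵀ * P = 1) (v w : E3) :
    ⟪acl P v, acl P w⟫ = ⟪v, w⟫ := by
  have h : ⟪acl P v, acl P w⟫ = ⟪v, acl (Pᵀ * P) w⟫ := by
    rw [acl_mul]
    simp only [inner3, acl_apply, Matrix.transpose_apply]
    ring
  rw [h, hP, acl_one]

/-- The flat embedding of the plane. -/
def Jc : ℝ × ℝ →L[ℝ] E3 :=
  (ContinuousLinearMap.fst ℝ ℝ ℝ).smulRight (EuclideanSpace.single 0 1) +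
  (ContinuousLinearMap.snd ℝ ℝ ℝ).smulRight (EuclideanSpace.single 1 1)

lemma Jc_apply (q : ℝ × ℝ) :
    Jc q = q.1 • (EuclideanSpace.single 0 1 : E3) + q.2 • (EuclideanSpace.single 1 1 : E3) := by
  simp [Jc]

/-- Orthonormality of the two partial derivatives. -/
def ON (A : ℝ × ℝ →L[ℝ] E3) : Prop :=
  ⟪A (1, 0), A (1, 0)⟫ = 1 ∧ ⟪A (0, 1), A (0, 1)⟫ = 1 ∧ ⟪A (1, 0), A (0, 1)⟫ = 0

lemma ON_Jc : ON Jc := by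
  simp [ON, inner3, Jc_apply]

lemma ON_comp {A : ℝ × ℝ →L[ℝ] E3} (hA : ON A) {P : Matrix (Fin 3) (Fin 3) ℝ}
    (hP : Pᵀ * P = 1) : ON ((acl P).comp A) := by
  simp only [ON, ContinuousLinearMap.comp_apply, acl_inner P hP]
  exact hA

/-- Ribbons of length `L` with end point `p` and end frame `P`, flat near both ends. -/
def Rib (L : ℝ) (p : E3) (P : Matrix (Fin 3) (Fin 3) ℝ) : Prop :=
  0 < L ∧ Pᵀ * P = 1 ∧ ∃ (w η : ℝ) (u : ℝ × ℝ → E3), 0 < w ∧ 0 < η ∧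
    ContDiff ℝ (⊤ : ℕ∞) u ∧
    (∀ x y : ℝ, y ∈ Ioo (-w) w → ON (fderiv ℝ u (x, y))) ∧
    (∀ x y : ℝ, y ∈ Ioo (-w) w → x < η → u (x, y) = Jc (x, y)) ∧
    (∀ x y : ℝ, y ∈ Ioo (-w) w → L - η < x → u (x, y) = p + acl P (Jc (x - L, y)))

lemma Rib.flat {L : ℝ} (hL : 0 < L) : Rib L (L • EuclideanSpace.single 0 1) 1 := by
  refine ⟨hL, by simp, 1, 1, Jc, one_pos, one_pos, Jc.contDiff, ?_, ?_, ?_⟩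
  · intro x y _
    rw [Jc.fderiv]
    exact ON_Jc
  · intros; rfl
  · intro x y _ _
    rw [acl_one, Jc_apply, Jc_apply]
    module

lemma Rib.scale {L : ℝ} {p : E3} {P} (h : Rib L p P) {c : ℝ} (hc : 0 < c) :
    Rib (c * L) (c • p) P := by
  obtain ⟨hL, hP, w, η, u, hw, hη, hu, h1, h2, h3⟩ := h
  have hy : ∀ y : ℝ, y ∈ Ioo (-(c * w)) (c * w) → c⁻¹ * y ∈ Ioo (-w) w := by
    intro y hy
    constructor
    · rw [← div_eq_inv_mul, lt_div_iff₀ hc]; linarith [hy.1]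
    · rw [← div_eq_inv_mul, div_lt_iff₀ hc]; linarith [hy.2]
  have hfd : ∀ q : ℝ × ℝ, fderiv ℝ (fun q : ℝ × ℝ => c • u (c⁻¹ • q)) q
      = fderiv ℝ u (c⁻¹ • q) := by
    intro q
    have hd := (hu.differentiable (by simp)) (c⁻¹ • q)
    have := (hd.hasFDerivAt.comp q ((hasFDerivAt_id q).const_smul c⁻¹)).const_smul c
    have h2 : fderiv ℝ (fun q : ℝ × ℝ => c • u (c⁻¹ • q)) q = _ := HasFDerivAt.fderiv this
    rw [h2]
    ext v <;> simp [hc.ne']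
  refine ⟨by positivity, hP, c * w, c * η, fun q => c • u (c⁻¹ • q), by positivity,
    by positivity, ?_, ?_, ?_, ?_⟩
  · exact (hu.comp (contDiff_id.const_smul c⁻¹)).const_smul c
  · intro x y hyy
    rw [hfd]
    exact h1 _ _ (hy y hyy)
  · intro x y hyy hx
    have := h2 (c⁻¹ * x) (c⁻¹ * y) (hy y hyy)
      (by rw [← div_eq_inv_mul, div_lt_iff₀ hc]; linarith)
    simp only [Prod.smul_mk, smul_eq_mul]
    rw [this, ← map_smul]
    congr 1
    simp [hc.ne']
  · intro x y hyy hx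
    have := h3 (c⁻¹ * x) (c⁻¹ * y) (hy y hyy)
      (by rw [← div_eq_inv_mul, lt_div_iff₀ hc]; linarith)
    simp only [Prod.smul_mk, smul_eq_mul]
    rw [this, smul_add, ← map_smul, ← map_smul]
    congr 3
    simp only [Prod.smul_mk, smul_eq_mul, Prod.mk.injEq]
    constructor <;> field_simp

lemma Rib.concat {L₁ L₂ : ℝ} {p₁ p₂ : E3} {P₁ P₂} (H₁ : Rib L₁ p₁ P₁) (H₂ : Rib L₂ p₂ P₂) :
    Rib (L₁ + L₂) (p₁ + acl P₁ p₂) (P₁ * P₂) := by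
  obtain ⟨hL, hP, w, η, u, hw, hη, hu, h1, h2, h3⟩ := H₁
  obtain ⟨gL, gP, w', η', v, gw, gη, gu, g1, g2, g3⟩ := H₂
  set U : ℝ × ℝ → E3 := fun q => u q + acl P₁ (v (q - (L₁, 0)) - Jc (q - (L₁, 0))) with hU
  have hJ : ∀ x y : ℝ, ((x, y) : ℝ × ℝ) - (L₁, 0) = (x - L₁, y) := by intro x y; simp
  have e1 : ∀ x y : ℝ, y ∈ Ioo (-min w w') (min w w') → x < L₁ + η' → U (x, y) = u (x, y) := by
    intro x y hy hx
    simp only [hU, hJ]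
    rw [g2 (x - L₁) y ⟨by linarith [hy.1, min_le_right w w'], by linarith [hy.2, min_le_right w w']⟩
      (by linarith)]
    simp
  have e2 : ∀ x y : ℝ, y ∈ Ioo (-min w w') (min w w') → L₁ - η < x →
      U (x, y) = p₁ + acl P₁ (v ((x, y) - (L₁, 0))) := by
    intro x y hy hx
    simp only [hU, hJ]
    rw [h3 x y ⟨by linarith [hy.1, min_le_left w w'], by linarith [hy.2, min_le_left w w']⟩ hx]
    rw [map_sub]
    abel
  refine ⟨by positivity, ?_, min w w', min (min η L₁) (min η' L₂), U, lt_min hw gw, 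
    lt_min (lt_min hη hL) (lt_min gη gL), ?_, ?_, ?_, ?_⟩
  · rw [Matrix.transpose_mul, Matrix.mul_assoc, ← Matrix.mul_assoc P₁ᵀ, hP, Matrix.one_mul, gP]
  · exact hu.add ((acl P₁).contDiff.comp ((gu.comp (contDiff_id.sub contDiff_const)).sub
      (Jc.contDiff.comp (contDiff_id.sub contDiff_const))))
  · intro x y hy
    have hyn : ∀ᶠ q : ℝ × ℝ in 𝓝 (x, y), q.2 ∈ Ioo (-min w w') (min w w') :=
      continuous_snd.continuousAt.eventually (isOpen_Ioo.mem_nhds hy)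
    by_cases hx : x < L₁ + η'
    · have hxn : ∀ᶠ q : ℝ × ℝ in 𝓝 (x, y), q.1 < L₁ + η' :=
        continuous_fst.continuousAt.eventually (isOpen_Iio.mem_nhds (show (x, y).1 ∈ Iio (L₁ + η') from hx))
      have : U =ᶠ[𝓝 (x, y)] u := by
        filter_upwards [hyn, hxn] with q hq1 hq2 using e1 q.1 q.2 hq1 hq2
      rw [this.fderiv_eq]
      exact h1 x y ⟨by linarith [hy.1, min_le_left w w'], by linarith [hy.2, min_le_left w w']⟩
    · have hx : L₁ - η < x := by linarith
      have hxn : ∀ᶠ q : ℝ × ℝ in 𝓝 (x, y), L₁ - η < q.1 :=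
        continuous_fst.continuousAt.eventually (isOpen_Ioi.mem_nhds (show (x, y).1 ∈ Ioi (L₁ - η) from hx))
      have : U =ᶠ[𝓝 (x, y)] fun q => p₁ + acl P₁ (v (q - (L₁, 0))) := by
        filter_upwards [hyn, hxn] with q hq1 hq2 using e2 q.1 q.2 hq1 hq2
      rw [this.fderiv_eq]
      have hd := (gu.differentiable (by simp)) ((x, y) - (L₁, 0))
      have hd2 := ((acl P₁).hasFDerivAt.comp (x, y)
        (hd.hasFDerivAt.comp (x, y) ((hasFDerivAt_id (x, y)).sub_const (L₁, 0)))).const_add p₁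
      have hd3 : fderiv ℝ (fun q : ℝ × ℝ => p₁ + acl P₁ (v (q - (L₁, 0)))) (x, y) = _ := hd2.fderiv
      rw [hd3, hJ]
      exact ON_comp (g1 (x - L₁) y
        ⟨by linarith [hy.1, min_le_right w w'], by linarith [hy.2, min_le_right w w']⟩) hP
  · intro x y hy hx
    simp only [lt_min_iff] at hx
    rw [e1 x y hy (by linarith [hx.1.2])]
    exact h2 x y ⟨by linarith [hy.1, min_le_left w w'], by linarith [hy.2, min_le_left w w']⟩ hx.1.1
  · intro x y hy hx
    have m1 : min (min η L₁) (min η' L₂) ≤ η' := (min_le_right _ _).trans (min_le_left _ _)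
    have m2 : min (min η L₁) (min η' L₂) ≤ L₂ := (min_le_right _ _).trans (min_le_right _ _)
    rw [e2 x y hy (by linarith), hJ, g3 (x - L₁) y
        ⟨by linarith [hy.1, min_le_right w w'], by linarith [hy.2, min_le_right w w']⟩
        (by linarith), map_add, acl_mul, sub_sub, add_assoc]

/-- The rotation matrix of a bend. -/
def bendM (c s C S : ℝ) : Matrix (Fin 3) (Fin 3) ℝ :=
  !![1 + (C - 1) * c ^ 2, (C - 1) * c * s, S * c;
     (C - 1) * c * s, 1 + (C - 1) * s ^ 2, S * s;
     -(S * c), -(S * s), C]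

/-- The direction in which a bend of angle `φ` deviates. -/
def bendg (c s C S : ℝ) : E3 :=
  (C - 1) • (c • EuclideanSpace.single 0 1 + s • EuclideanSpace.single 1 1)
    - S • EuclideanSpace.single 2 1

lemma bend_J (c s C S : ℝ) (q : ℝ × ℝ) :
    acl (bendM c s C S) (Jc q) = Jc q + (c * q.1 + s * q.2) • bendg c s C S := by
  ext i
  fin_cases i <;> simp [acl_apply, Jc_apply, bendM, bendg] <;> ring

lemma bend_orth (c s C S : ℝ) (h : c ^ 2 + s ^ 2 = 1) (h' : C ^ 2 + S ^ 2 = 1) :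
    (bendM c s C S)ᵀ * bendM c s C S = 1 := by
  have hs : s ^ 2 = 1 - c ^ 2 := by linarith
  have hS : S ^ 2 = 1 - C ^ 2 := by linarith
  ext i j
  fin_cases i <;> fin_cases j <;>
    simp [bendM, Matrix.mul_apply, Fin.sum_univ_three, Matrix.transpose_apply] <;> grind

/-- A cylindrical bend. -/
lemma Rib.bend (c s Φ : ℝ) (h : c ^ 2 + s ^ 2 = 1) (hc : 0 < c) :
    ∃ L p, Rib L p (bendM c s (Real.cos Φ) (Real.sin Φ)) := by
  set φ : ℝ → ℝ := fun t => Φ * Real.smoothTransition t with hφ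
  have hφs : ContDiff ℝ (⊤ : ℕ∞) φ := contDiff_const.mul Real.smoothTransition.contDiff
  set g : ℝ → E3 := fun t => bendg c s (Real.cos (φ t)) (Real.sin (φ t)) with hg
  have hgs : ContDiff ℝ (⊤ : ℕ∞) g := by
    have h1 := Real.contDiff_cos.comp hφs
    have h2 := Real.contDiff_sin.comp hφs
    exact ((h1.sub contDiff_const).smul contDiff_const).sub (h2.smul contDiff_const)
  set H : ℝ → E3 := fun t => ∫ r in (0:ℝ)..t, g r with hH
  have hHd : ∀ t, HasDerivAt H (g t) t := fun t =>
    intervalIntegral.integral_hasDerivAt_right (hgs.continuous.intervalIntegrable _ _)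
      (hgs.continuous.stronglyMeasurableAtFilter _ _) hgs.continuous.continuousAt
  have hHs : ContDiff ℝ (⊤ : ℕ∞) H := by
    rw [contDiff_infty_iff_deriv]
    refine ⟨fun t => (hHd t).differentiableAt, ?_⟩
    have : deriv H = g := funext fun t => (hHd t).deriv
    rw [this]; exact hgs
  have hH0 : ∀ t ≤ 0, H t = 0 := by
    intro t ht
    have : ∀ r ∈ uIcc 0 t, g r = (fun _ => (0 : E3)) r := by
      intro r hr
      rw [uIcc_of_ge ht] at hr
      simp [hg, hφ, Real.smoothTransition.zero_of_nonpos hr.2, bendg]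
    simp only [hH]
    rw [intervalIntegral.integral_congr this]
    simp
  set g1 := bendg c s (Real.cos Φ) (Real.sin Φ) with hg1
  have hH1 : ∀ t, 1 ≤ t → H t = H 1 + (t - 1) • g1 := by
    intro t ht
    have : ∀ r ∈ uIcc 1 t, g r = (fun _ => g1) r := by
      intro r hr
      rw [uIcc_of_le ht] at hr
      simp [hg, hg1, hφ, Real.smoothTransition.one_of_one_le hr.1]
    simp only [hH]
    rw [← intervalIntegral.integral_add_adjacent_intervals
      (hgs.continuous.intervalIntegrable 0 1) (hgs.continuous.intervalIntegrable 1 t),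
      intervalIntegral.integral_congr this]
    simp
  set l : ℝ × ℝ →L[ℝ] ℝ := c • ContinuousLinearMap.fst ℝ ℝ ℝ + s • ContinuousLinearMap.snd ℝ ℝ ℝ
    with hl
  have hlq : ∀ q : ℝ × ℝ, l q = c * q.1 + s * q.2 := by intro q; simp [hl]
  have hs1 : |s| ≤ 1 := abs_le_one_iff_mul_self_le_one.mpr (by nlinarith)
  have hsy : ∀ y ∈ Ioo (-(c / 2)) (c / 2), |s * y| ≤ c / 2 := by
    intro y hy
    rw [abs_mul]
    have : |y| ≤ c / 2 := abs_le.mpr ⟨hy.1.le, hy.2.le⟩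
    nlinarith [abs_nonneg s, abs_nonneg y]
  refine ⟨2 + 1 / c, Jc (2 + 1 / c, 0) + H 1 + (c * (1 + 1 / c) - 1) • g1, by positivity,
    bend_orth _ _ _ _ h (Real.cos_sq_add_sin_sq Φ), c / 2, 1 / 2,
    fun q => Jc q + H (l q - c), by positivity, by norm_num, ?_, ?_, ?_, ?_⟩
  · exact Jc.contDiff.add (hHs.comp (l.contDiff.sub contDiff_const))
  · intro x y hy
    have hd := Jc.hasFDerivAt.add ((hHd (l (x, y) - c)).hasFDerivAt.comp (x, y)
      ((l.hasFDerivAt (x := (x, y))).sub_const c))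
    have hd2 : fderiv ℝ (fun q => Jc q + H (l q - c)) (x, y) = _ := hd.fderiv
    rw [hd2]
    set t := l (x, y) - c
    have : (Jc + (ContinuousLinearMap.toSpanSingleton ℝ (g t)).comp l) =
        (acl (bendM c s (Real.cos (φ t)) (Real.sin (φ t)))).comp Jc := by
      apply ContinuousLinearMap.ext
      intro q
      rw [ContinuousLinearMap.comp_apply, bend_J]
      simp [hlq, hg]
    have h2 := ON_comp ON_Jc (bend_orth c s _ _ h (Real.cos_sq_add_sin_sq (φ t)))
    rw [← this] at h2
    exact h2
  · intro x y hy hx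
    have := abs_le.mp (hsy y hy)
    simp only [hlq]
    rw [hH0 _ (by nlinarith [this.2])]
    simp
  · intro x y hy hx
    have := abs_le.mp (hsy y hy)
    have hcc : c * (1 / c) = 1 := by field_simp
    rw [bend_J]
    simp only [hlq]
    rw [hH1 _ (by nlinarith [this.1])]
    have e : c * x + s * y - c - 1 = (c * (1 + 1 / c) - 1) + (c * (x - (2 + 1 / c)) + s * y) := by
      ring
    have e' : Jc (x, y) = Jc (2 + 1 / c, 0) + Jc (x - (2 + 1 / c), y) := by
      rw [← map_add]; simp
    rw [e, e', add_smul]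
    simp only [← hg1]
    abel

/-- Frames reachable by some ribbon. -/
def Reach (P : Matrix (Fin 3) (Fin 3) ℝ) : Prop := ∃ L p, Rib L p P

lemma Reach.mul {P Q} (hP : Reach P) (hQ : Reach Q) : Reach (P * Q) := by
  obtain ⟨L, p, h⟩ := hP
  obtain ⟨L', p', h'⟩ := hQ
  exact ⟨_, _, h.concat h'⟩

/-- Rotation about the second axis. -/
def rotY (C S : ℝ) : Matrix (Fin 3) (Fin 3) ℝ := !![C, 0, S; 0, 1, 0; -S, 0, C]

/-- Rotation about the third axis. -/
def rotZ (C S : ℝ) : Matrix (Fin 3) (Fin 3) ℝ := !![C, -S, 0; S, C, 0; 0, 0, 1]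

lemma reach_rotY (b : ℝ) : Reach (rotY (Real.cos b) (Real.sin b)) := by
  have := Rib.bend 1 0 b (by norm_num) one_pos
  have e : bendM 1 0 (Real.cos b) (Real.sin b) = rotY (Real.cos b) (Real.sin b) := by
    ext i j
    fin_cases i <;> fin_cases j <;> simp [bendM, rotY]
  rwa [e] at this

lemma reach_half (c s : ℝ) (h : c ^ 2 + s ^ 2 = 1) (hc : c ≠ 0) : Reach (bendM c s (-1) 0) := by
  rcases lt_or_gt_of_ne hc with hc | hc
  · have := Rib.bend (-c) (-s) Real.pi (by linarith) (by linarith)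
    have e : bendM (-c) (-s) (Real.cos Real.pi) (Real.sin Real.pi) = bendM c s (-1) 0 := by
      ext i j
      fin_cases i <;> fin_cases j <;> simp [bendM]
    rwa [e] at this
  · have := Rib.bend c s Real.pi h hc
    rwa [Real.cos_pi, Real.sin_pi] at this

lemma reach_rotZ_aux (t : ℝ) (ht : Real.cos t ≠ 0) :
    Reach (rotZ (Real.cos (2 * t)) (Real.sin (2 * t))) := by
  have h1 := reach_half (Real.cos t) (Real.sin t) (Real.cos_sq_add_sin_sq t) ht
  have h2 := reach_half 1 0 (by norm_num) one_ne_zero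
  have h3 := h1.mul h2
  have e : bendM (Real.cos t) (Real.sin t) (-1) 0 * bendM 1 0 (-1) 0 =
      rotZ (Real.cos (2 * t)) (Real.sin (2 * t)) := by
    have hs := Real.cos_sq_add_sin_sq t
    rw [Real.cos_two_mul, Real.sin_two_mul]
    ext i j
    fin_cases i <;> fin_cases j <;> 
      simp [bendM, rotZ, Matrix.mul_apply, Fin.sum_univ_three] <;> grind
  rwa [e] at h3

lemma reach_rotZ (t : ℝ) : Reach (rotZ (Real.cos t) (Real.sin t)) := by
  by_cases h : Real.cos (t / 2) = 0
  · have h4 : Real.cos (t / 4) ≠ 0 := by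
      intro h4
      have := Real.cos_two_mul (t / 4)
      rw [h4, show 2 * (t / 4) = t / 2 by ring, h] at this
      norm_num at this
    have h5 := reach_rotZ_aux _ h4
    have h6 := h5.mul h5
    have e : rotZ (Real.cos (2 * (t / 4))) (Real.sin (2 * (t / 4))) *
        rotZ (Real.cos (2 * (t / 4))) (Real.sin (2 * (t / 4))) =
        rotZ (Real.cos t) (Real.sin t) := by
      have e1 := Real.cos_two_mul (2 * (t / 4))
      have e2 := Real.sin_two_mul (2 * (t / 4))
      have e3 := Real.cos_sq_add_sin_sq (2 * (t / 4))
      rw [show 2 * (2 * (t / 4)) = t by ring] at e1 e2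
      rw [e1, e2]
      ext i j
      fin_cases i <;> fin_cases j <;> 
        simp [rotZ, Matrix.mul_apply, Fin.sum_univ_three] <;> grind
    rwa [e] at h6
  · have := reach_rotZ_aux _ h
    rwa [show 2 * (t / 2) = t by ring] at this

lemma polar (x y : ℝ) : ∃ r a : ℝ, 0 ≤ r ∧ r ^ 2 = x ^ 2 + y ^ 2 ∧ x = r * Real.cos a ∧
    y = r * Real.sin a := by
  refine ⟨‖(⟨x, y⟩ : ℂ)‖, Complex.arg ⟨x, y⟩, norm_nonneg _, ?_, ?_, ?_⟩
  · rw [Complex.sq_norm, Complex.normSq_apply]; ring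
  · rw [Complex.norm_mul_cos_arg]
  · rw [Complex.norm_mul_sin_arg]

lemma polar_one (x y : ℝ) (h : x ^ 2 + y ^ 2 = 1) : ∃ a : ℝ, x = Real.cos a ∧ y = Real.sin a := by
  obtain ⟨r, a, hr, h1, h2, h3⟩ := polar x y
  have : r = 1 := by nlinarith
  subst this
  exact ⟨a, by simpa using h2, by simpa using h3⟩

lemma SO3_mul {P Q} (hP : P ∈ SO3) (hQ : Q ∈ SO3) : P * Q ∈ SO3 := by
  refine ⟨?_, ?_⟩
  · rw [Matrix.transpose_mul, Matrix.mul_assoc, ← Matrix.mul_assoc Q, hQ.1, Matrix.one_mul, hP.1]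
  · rw [Matrix.det_mul, hP.2, hQ.2, one_mul]

lemma SO3_left {P} (hP : P ∈ SO3) : Pᵀ * P = 1 := mul_eq_one_comm.mp hP.1

lemma SO3_transpose {P} (hP : P ∈ SO3) : Pᵀ ∈ SO3 :=
  ⟨by rw [Matrix.transpose_transpose]; exact SO3_left hP, by rw [Matrix.det_transpose, hP.2]⟩

lemma rotY_mem (C S : ℝ) (h : C ^ 2 + S ^ 2 = 1) : rotY C S ∈ SO3 := by
  constructor
  · ext i j
    fin_cases i <;> fin_cases j <;> 
      simp [rotY, Matrix.mul_apply, Fin.sum_univ_three] <;> grind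
  · simp [rotY, Matrix.det_fin_three]; grind

lemma rotZ_mem (C S : ℝ) (h : C ^ 2 + S ^ 2 = 1) : rotZ C S ∈ SO3 := by
  constructor
  · ext i j
    fin_cases i <;> fin_cases j <;> 
      simp [rotZ, Matrix.mul_apply, Fin.sum_univ_three] <;> grind
  · simp [rotZ, Matrix.det_fin_three]; grind

lemma stab_e3 {K} (hK : K ∈ SO3) (h02 : K 0 2 = 0) (h12 : K 1 2 = 0) (h22 : K 2 2 = 1) :
    Reach K := by
  have r (i j : Fin 3) := congrFun (congrFun hK.1 i) j
  simp only [Matrix.mul_apply, Fin.sum_univ_three, Matrix.transpose_apply] at r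
  have r22 := r 2 2
  have r00 := r 0 0
  have r01 := r 0 1
  have r11 := r 1 1
  simp [h02, h12, h22] at r22 r00 r01 r11
  have d := hK.2
  rw [Matrix.det_fin_three, h02, h12, h22] at d
  have z0 : K 2 0 = 0 := by nlinarith [sq_nonneg (K 2 0), sq_nonneg (K 2 1)]
  have z1 : K 2 1 = 0 := by nlinarith [sq_nonneg (K 2 0), sq_nonneg (K 2 1)]
  have a1 : K 1 1 = K 0 0 := by grind
  have a2 : K 0 1 = -K 1 0 := by grind
  obtain ⟨a, ha, hb⟩ := polar_one (K 0 0) (K 1 0) (by grind)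
  have : K = rotZ (Real.cos a) (Real.sin a) := by
    ext i j
    fin_cases i <;> fin_cases j <;> simp [rotZ, *]
  rw [this]
  exact reach_rotZ a

lemma reach_all {M} (hM : M ∈ SO3) : Reach M := by
  have r (i j : Fin 3) := congrFun (congrFun (SO3_left hM) i) j
  simp only [Matrix.mul_apply, Fin.sum_univ_three, Matrix.transpose_apply] at r
  have r22 := r 2 2
  simp at r22
  obtain ⟨ρ, a, hρ, h1, h2, h3⟩ := polar (M 0 2) (M 1 2)
  obtain ⟨b, hb1, hb2⟩ := polar_one (M 2 2) ρ (by linarith)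
  set Z := rotZ (Real.cos a) (Real.sin a) with hZ
  set Y := rotY (Real.cos b) (Real.sin b) with hY
  have mZ : Z ∈ SO3 := rotZ_mem _ _ (Real.cos_sq_add_sin_sq a)
  have mY : Y ∈ SO3 := rotY_mem _ _ (Real.cos_sq_add_sin_sq b)
  have key : M = Z * (Y * (Yᵀ * (Zᵀ * M))) := by
    rw [← Matrix.mul_assoc Y, mY.1, Matrix.one_mul, ← Matrix.mul_assoc Z, mZ.1, Matrix.one_mul]
  rw [key]
  have ca := Real.cos_sq_add_sin_sq a
  have cb := Real.cos_sq_add_sin_sq b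
  refine (reach_rotZ a).mul ((reach_rotY b).mul
    (stab_e3 (SO3_mul (SO3_transpose mY) (SO3_mul (SO3_transpose mZ) hM)) ?_ ?_ ?_))
  · simp [hY, hZ, rotY, rotZ, Matrix.mul_apply, Fin.sum_univ_three]; grind
  · simp [hY, hZ, rotY, rotZ, Matrix.mul_apply, Fin.sum_univ_three]; grind
  · simp [hY, hZ, rotY, rotZ, Matrix.mul_apply, Fin.sum_univ_three]; grind

lemma exists_frame (v : E3) (hv : ‖v‖ = 1) : ∃ Q ∈ SO3, acl Q (EuclideanSpace.single 0 1) = v := by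
  have hn : v 0 ^ 2 + v 1 ^ 2 + v 2 ^ 2 = 1 := by
    have h1 := inner3 v v
    rw [real_inner_self_eq_norm_sq, hv] at h1
    linarith
  obtain ⟨ρ, a, hρ, h1, h2, h3⟩ := polar (v 0) (v 1)
  obtain ⟨b, hb1, hb2⟩ := polar_one ρ (-v 2) (by linarith)
  refine ⟨rotZ (Real.cos a) (Real.sin a) * rotY (Real.cos b) (Real.sin b),
    SO3_mul (rotZ_mem _ _ (Real.cos_sq_add_sin_sq a)) (rotY_mem _ _ (Real.cos_sq_add_sin_sq b)), ?_⟩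
  ext i
  rw [acl_mul]
  fin_cases i <;> simp [acl_apply, rotY, rotZ] <;> grind

/-- `K` is a set of (length, displacement) pairs realizable up to a small error. -/
def Good (K : ℝ → E3 → Prop) : Prop :=
  ∀ R ∈ SO3, ∃ (Λ : ℝ) (c : E3), ∀ ε > 0, ∀ a p, K a p → Rib (ε * Λ + a) (ε • c + p) R

lemma good_zero : Good (fun a p => a = 0 ∧ p = 0) := by
  intro R hR
  obtain ⟨L, p, h⟩ := reach_all hR
  refine ⟨L, p, ?_⟩
  rintro ε hε a q ⟨rfl, rfl⟩
  simpa using h.scale hε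

lemma Good.step {K} (hK : Good K) (v : E3) (hv : ‖v‖ = 1) :
    Good (fun a p => ∃ t b q, 0 < t ∧ K b q ∧ a = b + t ∧ p = q + t • v) := by
  intro R hR
  obtain ⟨Q, hQ, hQv⟩ := exists_frame v hv
  obtain ⟨Λ, c, h⟩ := hK Q hQ
  obtain ⟨L, p, h'⟩ := reach_all (SO3_mul (SO3_transpose hQ) hR)
  refine ⟨Λ + L, c + acl Q p, ?_⟩
  rintro ε hε a p' ⟨t, b, q, ht, hbq, rfl, rfl⟩
  have := ((h ε hε b q hbq).concat (Rib.flat ht)).concat (h'.scale hε)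
  rw [Matrix.mul_one, ← Matrix.mul_assoc, hQ.1, Matrix.one_mul, map_smul, map_smul, hQv] at this
  convert this using 1
  · ring
  · module

lemma rib_main {R} (hR : R ∈ SO3) (γ : E3) (hγ : ‖γ‖ < 1) : Rib 1 γ R := by
  obtain ⟨Q, hQ, hQv⟩ : ∃ Q ∈ SO3, γ = ‖γ‖ • acl Q (EuclideanSpace.single 0 1) := by
    by_cases h : γ = 0
    · exact ⟨1, ⟨by simp, by simp⟩, by simp [h]⟩
    · obtain ⟨Q, hQ, hv⟩ := exists_frame (‖γ‖⁻¹ • γ) (by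
        rw [norm_smul, norm_inv, norm_norm]; exact inv_mul_cancel₀ (norm_ne_zero_iff.mpr h))
      refine ⟨Q, hQ, ?_⟩
      rw [hv, smul_smul, mul_inv_cancel₀ (norm_ne_zero_iff.mpr h), one_smul]
  have hn : ∀ i : Fin 3, ‖acl Q (EuclideanSpace.single i 1)‖ = 1 := by
    intro i
    have h1 := acl_inner Q (SO3_left hQ) (EuclideanSpace.single i 1) (EuclideanSpace.single i 1)
    rw [real_inner_self_eq_norm_sq, real_inner_self_eq_norm_sq] at h1
    have h2 : ‖(EuclideanSpace.single i 1 : E3)‖ = 1 := by simp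
    rw [h2] at h1
    nlinarith [norm_nonneg (acl Q (EuclideanSpace.single i 1))]
  set g := ‖γ‖ with hg
  have hg0 : 0 ≤ g := norm_nonneg γ
  set f : Fin 3 → E3 := fun i => acl Q (EuclideanSpace.single i 1) with hf
  have hnf : ∀ i, ‖f i‖ = 1 := hn
  have hnf' : ∀ i, ‖-f i‖ = 1 := fun i => by rw [norm_neg, hnf]
  obtain ⟨Λ, c, h⟩ := ((((((good_zero.step _ (hnf 0)).step _ (hnf' 0)).step _ (hnf 1)).step _
    (hnf' 1)).step _ (hnf 2)).step _ (hnf' 2)) R hR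
  obtain ⟨c', hc'⟩ : ∃ c' : Fin 3 → ℝ, c = c' 0 • f 0 + c' 1 • f 1 + c' 2 • f 2 := by
    refine ⟨fun i => acl Qᵀ c i, ?_⟩
    simp only [hf]
    rw [← map_smul, ← map_smul, ← map_smul, ← map_add, ← map_add]
    have : c = acl Q (acl Qᵀ c) := by rw [← acl_mul, hQ.1, acl_one]
    nth_rewrite 1 [this]
    congr 1
    ext i
    fin_cases i <;> simp
  set s : ℝ → ℝ := fun ε => (1 - g - ε * Λ + ε * (c' 0 + c' 1 + c' 2)) / 6 with hs
  have hsc : Continuous s := by fun_prop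
  have ev : ∀ k : ℝ, ∀ᶠ ε in 𝓝[>] (0:ℝ), 0 < s ε - ε * k := by
    intro k
    have hc : Continuous fun ε => s ε - ε * k := by fun_prop
    have : (fun ε => s ε - ε * k) 0 ∈ Ioi (0:ℝ) := by
      simp only [hs, mem_Ioi]; linarith
    exact (hc.continuousAt.eventually (isOpen_Ioi.mem_nhds this)).filter_mono nhdsWithin_le_nhds
  obtain ⟨ε, hε, e0, e1, e2, e3⟩ := (eventually_mem_nhdsWithin.and
    ((ev (c' 0)).and ((ev (c' 1)).and ((ev (c' 2)).and (ev 0))))).exists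
  have hε : 0 < ε := hε
  have e3 : 0 < s ε := by simpa using e3
  have hs6 : 6 * s ε = 1 - g - ε * Λ + ε * (c' 0 + c' 1 + c' 2) := by simp only [hs]; ring
  have fin := h ε hε _ _ ⟨s ε, _, _, e3, ⟨s ε - ε * c' 2, _, _, e2, ⟨s ε, _, _, e3,
    ⟨s ε - ε * c' 1, _, _, e1, ⟨s ε, _, _, e3, ⟨s ε - ε * c' 0 + g, _, _, by linarith,
    ⟨rfl, rfl⟩, rfl, rfl⟩, rfl, rfl⟩, rfl, rfl⟩, rfl, rfl⟩, rfl, rfl⟩, rfl, rfl⟩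
  convert fin using 1
  · linarith
  · rw [hQv, hc']
    change g • f 0 = _
    module

/-- Ribbons with finite width: for every `r̄ ∈ SO(3)` and `γ̄` with
`|γ̄| < 1` there are `w > 0` and a `C^∞` isometric immersion `u : [0,1] × [-w,w] → ℝ³` with
`u(0,0) = 0`, `u(1,0) = γ̄`, `∂ᵢu = eᵢ` on `{0} × (-w,w)` and `∂ᵢu = r̄ᵢ` on `{1} × (-w,w)`
for `i = 1,2`. -/
theorem statement14
    (rbar : Matrix (Fin 3) (Fin 3) ℝ) (hrbar : rbar ∈ SO3)
    (γbar : E3) (hγ : ‖γbar‖ < 1) :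
    ∃ (w : ℝ) (u : ℝ × ℝ → E3), 0 < w ∧ ContDiff ℝ (⊤ : ℕ∞) u ∧
      (∀ p ∈ Set.Icc (0:ℝ) 1 ×ˢ Set.Icc (-w) w,
        ⟪fderiv ℝ u p (1, 0), fderiv ℝ u p (1, 0)⟫ = 1 ∧
        ⟪fderiv ℝ u p (0, 1), fderiv ℝ u p (0, 1)⟫ = 1 ∧
        ⟪fderiv ℝ u p (1, 0), fderiv ℝ u p (0, 1)⟫ = 0) ∧
      u (0, 0) = 0 ∧ u (1, 0) = γbar ∧
      (∀ s ∈ Set.Ioo (-w) w,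
        fderiv ℝ u (0, s) (1, 0) = EuclideanSpace.single 0 1 ∧
        fderiv ℝ u (0, s) (0, 1) = EuclideanSpace.single 1 1 ∧
        fderiv ℝ u (1, s) (1, 0) = row3 rbar 0 ∧
        fderiv ℝ u (1, s) (0, 1) = row3 rbar 1) := by
  have hR := SO3_transpose hrbar
  obtain ⟨-, -, w, η, u, hw, hη, hu, h1, h2, h3⟩ := rib_main hR γbar hγ
  have hy0 : (0:ℝ) ∈ Ioo (-w) w := ⟨by linarith, hw⟩
  refine ⟨w / 2, u, by positivity, hu, ?_, ?_, ?_, ?_⟩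
  · rintro ⟨x, y⟩ ⟨-, hy⟩
    exact h1 x y ⟨by linarith [hy.1], by linarith [hy.2]⟩
  · rw [h2 0 0 hy0 hη]
    exact map_zero Jc
  · rw [h3 1 0 hy0 (by linarith)]
    simp [Jc_apply]
  · intro y hy
    have hy : y ∈ Ioo (-w) w := ⟨by linarith [hy.1], by linarith [hy.2]⟩
    have hyn : ∀ x : ℝ, ∀ᶠ q : ℝ × ℝ in 𝓝 (x, y), q.2 ∈ Ioo (-w) w := fun x =>
      continuous_snd.continuousAt.eventually (isOpen_Ioo.mem_nhds hy)
    have hx0 : ∀ᶠ q : ℝ × ℝ in 𝓝 (0, y), q.1 < η :=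
      continuous_fst.continuousAt.eventually
        (isOpen_Iio.mem_nhds (show ((0:ℝ), y).1 ∈ Iio η from hη))
    have hx1 : ∀ᶠ q : ℝ × ℝ in 𝓝 (1, y), 1 - η < q.1 :=
      continuous_fst.continuousAt.eventually
        (isOpen_Ioi.mem_nhds (show ((1:ℝ), y).1 ∈ Ioi (1 - η) by simpa using hη))
    have E0 : u =ᶠ[𝓝 (0, y)] Jc := by
      filter_upwards [hyn 0, hx0] with q hq1 hq2 using h2 q.1 q.2 hq1 hq2
    have E1 : u =ᶠ[𝓝 (1, y)] fun q => γbar + acl rbarᵀ (Jc (q - (1, 0))) := by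
      filter_upwards [hyn 1, hx1] with q hq1 hq2
      have := h3 q.1 q.2 hq1 hq2
      have e : q - ((1, 0) : ℝ × ℝ) = (q.1 - 1, q.2) := by ext <;> simp
      rw [e]
      exact this
    have hd2 := (((acl rbarᵀ).comp Jc).hasFDerivAt.comp ((1:ℝ), y)
        ((hasFDerivAt_id ((1:ℝ), y)).sub_const ((1:ℝ), (0:ℝ)))).const_add γbar
    have hd3 : fderiv ℝ (fun q : ℝ × ℝ => γbar + acl rbarᵀ (Jc (q - (1, 0)))) (1, y) = _ :=
      hd2.fderiv
    rw [E0.fderiv_eq, E1.fderiv_eq, Jc.fderiv, hd3]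
    refine ⟨by simp [Jc_apply], by simp [Jc_apply], ?_, ?_⟩
    · ext i
      simp [Jc_apply, acl_apply, row3]
    · ext i
      simp [Jc_apply, acl_apply, row3]
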